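/- Gronwall-type iteration bound: let C₀ ≥ 1, M₁ ≥ 1 and define T' = min(T₀, 1/(5 C₀⁶ M₁¹⁵)). Suppose nonnegative functions x_n : [0,T') → ℝ satisfy x_n(t) ≤ C₀ M₁³ exp(C₀ ∫₀ᵗ x_{n-1}(τ)⁵ dτ) for all n ≥ 1 and t ∈ [0,T'), and x₀(t) ≤ C₀M₁³(1 - 5C₀⁶M₁¹⁵ t)^{-1/5}. Then for every n ≥ 0 and t ∈ [0,T'): x_n(t) ≤ C₀ M₁³ (1 - 5 C₀⁶ M₁¹⁵ t)^{-1/5}. -/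

import Mathlib

open intervalIntegral

/-- Gronwall-type iteration bound. If each iterate satisfies
`x_n(t) ≤ C₀M₁³ exp(C₀ ∫₀ᵗ x_{n-1}(τ)⁵ dτ)` and the zeroth iterate satisfies the
algebraic bound, then all iterates satisfy
`x_n(t) ≤ C₀M₁³ (1 - 5C₀⁶M₁¹⁵ t)^{-1/5}` on `[0, T')` with
`T' = min(T₀, 1/(5C₀⁶M₁¹⁵))`. -/
theorem gronwall_iteration_bound
    (C₀ M₁ T₀ : ℝ) (hC₀ : 1 ≤ C₀) (hM₁ : 1 ≤ M₁) (hT₀ : 0 < T₀)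
    (T' : ℝ) (hT' : T' = min T₀ (1 / (5 * C₀ ^ 6 * M₁ ^ 15)))
    (x : ℕ → ℝ → ℝ)
    (hnonneg : ∀ n t, 0 ≤ t → t < T' → 0 ≤ x n t)
    (hint : ∀ n t, 0 ≤ t → t < T' →
      IntervalIntegrable (fun τ => x n τ ^ 5) MeasureTheory.volume 0 t)
    (hrec : ∀ n t, 0 ≤ t → t < T' →
      x (n + 1) t ≤ C₀ * M₁ ^ 3 * Real.exp (C₀ * ∫ τ in (0 : ℝ)..t, x n τ ^ 5))
    (hzero : ∀ t, 0 ≤ t → t < T' →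
      x 0 t ≤ C₀ * M₁ ^ 3 * (1 - 5 * C₀ ^ 6 * M₁ ^ 15 * t) ^ (-(1 / 5 : ℝ))) :
    ∀ n t, 0 ≤ t → t < T' →
      x n t ≤ C₀ * M₁ ^ 3 * (1 - 5 * C₀ ^ 6 * M₁ ^ 15 * t) ^ (-(1 / 5 : ℝ)) := by
  have hC : 0 < C₀ := by linarith
  have hM : 0 < M₁ := by linarith
  have hK : 0 < 5 * C₀ ^ 6 * M₁ ^ 15 := by positivity
  have hpos : ∀ t, t < T' → 0 < 1 - 5 * C₀ ^ 6 * M₁ ^ 15 * t := by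
    intro t ht
    have h1 : t < 1 / (5 * C₀ ^ 6 * M₁ ^ 15) :=
      lt_of_lt_of_le ht (hT' ▸ min_le_right _ _)
    rw [lt_div_iff₀ hK] at h1
    linarith
  intro n
  induction n with
  | zero => exact hzero
  | succ n ih =>
    intro t ht0 ht
    refine (hrec n t ht0 ht).trans ?_
    have hlt : ∀ τ ∈ Set.uIcc 0 t, 0 < 1 - 5 * C₀ ^ 6 * M₁ ^ 15 * τ := by
      intro τ hτ
      rw [Set.uIcc_of_le ht0] at hτ
      exact hpos τ (lt_of_le_of_lt hτ.2 ht)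
    have hgi : IntervalIntegrable
        (fun τ => C₀ ^ 5 * M₁ ^ 15 * (1 - 5 * C₀ ^ 6 * M₁ ^ 15 * τ)⁻¹)
        MeasureTheory.volume 0 t := by
      apply ContinuousOn.intervalIntegrable
      apply ContinuousOn.mul continuousOn_const
      apply ContinuousOn.inv₀ (by fun_prop)
      intro τ hτ
      exact (hlt τ hτ).ne'
    have hle : (∫ τ in (0 : ℝ)..t, x n τ ^ 5) ≤
        ∫ τ in (0 : ℝ)..t, C₀ ^ 5 * M₁ ^ 15 * (1 - 5 * C₀ ^ 6 * M₁ ^ 15 * τ)⁻¹ := by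
      apply intervalIntegral.integral_mono_on ht0 (hint n t ht0 ht) hgi
      intro τ hτ
      have hτT : τ < T' := lt_of_le_of_lt hτ.2 ht
      have h5 := pow_le_pow_left₀ (hnonneg n τ hτ.1 hτT) (ih τ hτ.1 hτT) 5
      refine h5.trans (le_of_eq ?_)
      have hr : ((1 - 5 * C₀ ^ 6 * M₁ ^ 15 * τ) ^ (-(1 / 5 : ℝ))) ^ 5 =
          (1 - 5 * C₀ ^ 6 * M₁ ^ 15 * τ)⁻¹ := by
        rw [← Real.rpow_natCast, ← Real.rpow_mul (hpos τ hτT).le, ← Real.rpow_neg_one]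
        norm_num
      rw [mul_pow, hr]
      ring
    have heq : (∫ τ in (0 : ℝ)..t, C₀ ^ 5 * M₁ ^ 15 * (1 - 5 * C₀ ^ 6 * M₁ ^ 15 * τ)⁻¹) =
        -(1 / (5 * C₀)) * Real.log (1 - 5 * C₀ ^ 6 * M₁ ^ 15 * t) := by
      have hd : ∀ τ ∈ Set.uIcc 0 t, HasDerivAt
          (fun τ => -(1 / (5 * C₀)) * Real.log (1 - 5 * C₀ ^ 6 * M₁ ^ 15 * τ))
          (C₀ ^ 5 * M₁ ^ 15 * (1 - 5 * C₀ ^ 6 * M₁ ^ 15 * τ)⁻¹) τ := by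
        intro τ hτ
        have h0 := (hlt τ hτ).ne'
        have h1 : HasDerivAt (fun τ : ℝ => 1 - 5 * C₀ ^ 6 * M₁ ^ 15 * τ)
            (-(5 * C₀ ^ 6 * M₁ ^ 15 * 1)) τ :=
          ((hasDerivAt_id τ).const_mul _).const_sub 1
        have h2 := (h1.log h0).const_mul (-(1 / (5 * C₀)))
        refine h2.congr_deriv (Eq.symm ?_)
        rw [div_eq_mul_inv (-(5 * C₀ ^ 6 * M₁ ^ 15 * 1)), ← mul_assoc (-(1 / (5 * C₀)))]
        congr 1
        field_simp
      rw [intervalIntegral.integral_eq_sub_of_hasDerivAt hd hgi]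
      simp
    rw [heq] at hle
    have hfin : C₀ * (∫ τ in (0 : ℝ)..t, x n τ ^ 5) ≤
        Real.log (1 - 5 * C₀ ^ 6 * M₁ ^ 15 * t) * (-(1 / 5 : ℝ)) := by
      refine (mul_le_mul_of_nonneg_left hle hC.le).trans (le_of_eq ?_)
      field_simp
    rw [Real.rpow_def_of_pos (hpos t ht)]
    exact mul_le_mul_of_nonneg_left (Real.exp_le_exp.mpr hfin) (by positivity)
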